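/- Let P(z) = ∑_{j=0}^{n} a_j z^j be a complex polynomial of degree n > 2 all of whose zeros lie in |z| ≤ k with k ≥ 1, let m = min_{|z|=k}|P(z)|, and let 0 ≤ l < 1. Then max_{|z|=1}|P′(z)| ≥ (n/(1+k^n))·(max_{|z|=1}|P(z)| + l·m) + (1 − 1/k^2)|a_1| + (1/(k^n(1+k^n)))·{ ((k^n|a_n| − l·m − |a_0|)/(k^n|a_n| − l·m + |a_0|))·(k^n·max_{|z|=1}|P(z)| − l·m) + k^{n−1}|a_{n−1}|·((k^n − 1)/n − (k^{n−2} − 1)/(n−2))·(n + (k^n|a_n| − l·m − |a_0|)/(k^n|a_n| − l·m + |a_0|)) }. -/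

import Mathlib

open Polynomial Metric

/-- The maximum of `|P(z)|` over the circle `|z| = r`. -/
noncomputable def maxMod (P : Polynomial ℂ) (r : ℝ) : ℝ :=
  ⨆ z : sphere (0 : ℂ) r, ‖P.eval (z : ℂ)‖

/-- The minimum of `|P(z)|` over the circle `|z| = r`. -/
noncomputable def minMod (P : Polynomial ℂ) (r : ℝ) : ℝ :=
  ⨅ z : sphere (0 : ℂ) r, ‖P.eval (z : ℂ)‖

/-!
Write `F z = P (k z)`, so that all zeros of `F` lie in the closed unit disc. At a point of the unit
circle each zero `w` contributes `Re (z / (z - w)) ≥ 1 / (1 + ‖w‖)` to `Re (z F' / F)`, and adding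
these up gives Dubinin's lower bound for `|F'|` in terms of `|aₙ|` and `|a₀|`. Adding `μ zⁿ` to `F`
keeps the zeros in the disc as long as `|μ|` is not a value of `|z|ⁿ |F (1 / z)|` in the open disc;
choosing the modulus of `μ` below the minimum or above the maximum of `|F|` on the circle, and its
argument so as to align `n μ zⁿ⁻¹` with `F'`, brings both extrema into the inequality. The polar
derivative `n F - z F'` is unaffected by `μ zⁿ` and has the modulus of the derivative of the
reversed polynomial, whose growth from `|z| = 1` to `|z| = k` then relates the maxima of `|P|` on
the two circles.

The growth estimates rest on the inequality of Frappier, Rahman and Ruscheweyh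
`|q(z)| + (1 - |z|²) |aₙ| ≤ max_{|w| = 1} |q(w)|` for `deg q ≤ n` and `|z| ≤ 1`. It holds because,
for each unimodular `β`, some unitary `U` with a unit vector `e` has moments `⟨Uʲe, e⟩ = zʲ` for
`j < n` and `⟨Uⁿe, e⟩ = zⁿ + β (1 - |z|²)`.
-/

section UnitaryDilation

open ComplexConjugate

theorem norm_aeval_le_of_mem_unitary {A : Type*} [CStarAlgebra A] {u : A} (hu : u ∈ unitary A)
    {q : ℂ[X]} {M : ℝ} (hM : ∀ z : ℂ, ‖z‖ = 1 → ‖q.eval z‖ ≤ M) : ‖aeval u q‖ ≤ M := by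
  have : IsStarNormal u := isStarNormal_of_mem_unitary hu
  have hM0 : 0 ≤ M := (norm_nonneg _).trans (hM 1 norm_one)
  rw [← cfc_polynomial q u]
  exact norm_cfc_le hM0 fun z hz =>
    hM z (by simpa using spectrum.subset_circle_of_unitary hu hz)

/-- A unitary dilation, for `‖z‖ ≤ 1` and `‖β‖ = 1`, of multiplication by `z` on the line spanned
by `e₀`. With `s = √(1 - ‖z‖²)` it maps `e₀` to `z e₀ + s e₁`, shifts `e₁, …, eₙ` by one index, and
closes up by sending the last basis vector `eₙ₊₁` to `β (s e₀ - z̄ e₁)`. It is used for its moments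
at `e₀`: these are `zʲ` for `j < n + 2`, and `zⁿ⁺² + β s²` for `j = n + 2`. -/
noncomputable def cyclicDilation (n : ℕ) (z β : ℂ) :
    EuclideanSpace ℂ (Fin (n + 2)) →ₗ[ℂ] EuclideanSpace ℂ (Fin (n + 2)) where
  toFun x := WithLp.toLp 2 <|
    Fin.cons (z * x 0 + β * √(1 - ‖z‖ ^ 2) * x (Fin.last _)) <|
      Fin.cons (√(1 - ‖z‖ ^ 2) * x 0 - β * conj z * x (Fin.last _))
        fun i : Fin n => x i.castSucc.succ
  map_add' x y := by
    ext i
    refine i.cases ?_ fun i => i.cases ?_ fun i => ?_ <;> simp <;> ring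
  map_smul' c x := by
    ext i
    refine i.cases ?_ fun i => i.cases ?_ fun i => ?_ <;> simp <;> ring

variable {n : ℕ} {z β : ℂ}

theorem cyclicDilation_apply_zero (x : EuclideanSpace ℂ (Fin (n + 2))) :
    cyclicDilation n z β x 0 = z * x 0 + β * √(1 - ‖z‖ ^ 2) * x (Fin.last _) := rfl

theorem cyclicDilation_apply_one (x : EuclideanSpace ℂ (Fin (n + 2))) :
    cyclicDilation n z β x 1 =
      √(1 - ‖z‖ ^ 2) * x 0 - β * conj z * x (Fin.last _) := rfl

theorem cyclicDilation_apply_succ_succ (x : EuclideanSpace ℂ (Fin (n + 2))) (i : Fin n) :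
    cyclicDilation n z β x i.succ.succ = x i.castSucc.succ := rfl

theorem norm_cyclicDilation_apply (hz : ‖z‖ ≤ 1) (hβ : ‖β‖ = 1)
    (x : EuclideanSpace ℂ (Fin (n + 2))) : ‖cyclicDilation n z β x‖ = ‖x‖ := by
  have rotation (s : ℝ) (hs : s ^ 2 = 1 - ‖z‖ ^ 2) (a b : ℂ) :
      ‖z * a + β * s * b‖ ^ 2 + ‖s * a - β * conj z * b‖ ^ 2 = ‖a‖ ^ 2 + ‖b‖ ^ 2 := by
    apply Complex.ofReal_injective
    have hs' : (s : ℂ) ^ 2 = 1 - z * conj z := by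
      rw [Complex.mul_conj']; exact_mod_cast hs
    have hβ' : β * conj β = 1 := by rw [Complex.mul_conj', hβ]; norm_num
    push_cast
    simp only [← Complex.mul_conj', map_add, map_sub, map_mul, Complex.conj_conj,
      Complex.conj_ofReal]
    linear_combination (a * conj a + β * conj β * b * conj b) * hs' + b * conj b * hβ'
  have hs := Real.sq_sqrt (show 0 ≤ 1 - ‖z‖ ^ 2 by nlinarith [norm_nonneg z])
  refine (pow_left_inj₀ (norm_nonneg _) (norm_nonneg _) two_ne_zero).1 ?_
  rw [EuclideanSpace.norm_sq_eq, EuclideanSpace.norm_sq_eq, Fin.sum_univ_succ, Fin.sum_univ_succ,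
    Fin.sum_univ_succ (fun i => ‖x i‖ ^ 2), Fin.sum_univ_castSucc (fun i => ‖x i.succ‖ ^ 2)]
  simp only [Fin.succ_zero_eq_one, cyclicDilation_apply_zero, cyclicDilation_apply_one,
    cyclicDilation_apply_succ_succ]
  rw [← add_assoc, rotation _ hs, Fin.succ_last]
  ring

theorem cyclicDilation_mem_unitary (hz : ‖z‖ ≤ 1) (hβ : ‖β‖ = 1) :
    (cyclicDilation n z β).toContinuousLinearMap ∈
      unitary (EuclideanSpace ℂ (Fin (n + 2)) →L[ℂ] EuclideanSpace ℂ (Fin (n + 2))) := by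
  let T : EuclideanSpace ℂ (Fin (n + 2)) →ₗᵢ[ℂ] EuclideanSpace ℂ (Fin (n + 2)) :=
    ⟨cyclicDilation n z β, norm_cyclicDilation_apply hz hβ⟩
  exact (Unitary.linearIsometryEquiv.symm (T.toLinearIsometryEquiv rfl)).2

theorem cyclicDilation_pow_single_one {j : ℕ} (hj : j < n + 1) :
    (cyclicDilation n z β ^ j) (EuclideanSpace.single 1 1) =
      EuclideanSpace.single (⟨j, hj⟩ : Fin (n + 1)).succ 1 := by
  induction j with
  | zero => rfl
  | succ j ih =>
    rw [pow_succ', Module.End.mul_apply, ih (by lia)]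
    ext i
    refine i.cases ?_ fun i => i.cases ?_ fun i => ?_
    · simp [cyclicDilation_apply_zero, Fin.ext_iff]; lia
    · simp [cyclicDilation_apply_one, Fin.ext_iff]; lia
    · simp [cyclicDilation_apply_succ_succ, Fin.ext_iff]

theorem cyclicDilation_single_zero :
    cyclicDilation n z β (EuclideanSpace.single 0 1) =
      z • EuclideanSpace.single 0 1 + (√(1 - ‖z‖ ^ 2) : ℂ) • EuclideanSpace.single 1 1 := by
  ext i
  refine i.cases ?_ fun i => i.cases ?_ fun i => ?_
  · simp [cyclicDilation_apply_zero]
  · simp [cyclicDilation_apply_one]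
  · simp [cyclicDilation_apply_succ_succ, Fin.ext_iff]

theorem cyclicDilation_pow_succ_single_zero_apply_zero (j : ℕ) :
    (cyclicDilation n z β ^ (j + 1)) (EuclideanSpace.single 0 1) 0 =
      z * (cyclicDilation n z β ^ j) (EuclideanSpace.single 0 1) 0 +
        √(1 - ‖z‖ ^ 2) * (cyclicDilation n z β ^ j) (EuclideanSpace.single 1 1) 0 := by
  rw [pow_succ, Module.End.mul_apply, cyclicDilation_single_zero, map_add, map_smul, map_smul]
  rfl

theorem cyclicDilation_pow_single_zero_apply_zero {j : ℕ} (hj : j < n + 2) :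
    (cyclicDilation n z β ^ j) (EuclideanSpace.single 0 1) 0 = z ^ j := by
  induction j with
  | zero => simp
  | succ j ih =>
    rw [cyclicDilation_pow_succ_single_zero_apply_zero, ih (by lia),
      cyclicDilation_pow_single_one (by lia)]
    simp [pow_succ']

theorem cyclicDilation_pow_dim_single_zero_apply_zero (hz : ‖z‖ ≤ 1) :
    (cyclicDilation n z β ^ (n + 2)) (EuclideanSpace.single 0 1) 0 =
      z ^ (n + 2) + β * (1 - ‖z‖ ^ 2) := by
  have hs : (√(1 - ‖z‖ ^ 2) : ℂ) ^ 2 = 1 - ‖z‖ ^ 2 := by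
    exact_mod_cast Real.sq_sqrt (show 0 ≤ 1 - ‖z‖ ^ 2 by nlinarith [norm_nonneg z])
  rw [cyclicDilation_pow_succ_single_zero_apply_zero,
    cyclicDilation_pow_single_zero_apply_zero (by lia), pow_succ' (cyclicDilation n z β) n,
    Module.End.mul_apply, cyclicDilation_pow_single_one (by lia), cyclicDilation_apply_zero]
  have hlast : (⟨n, n.lt_succ_self⟩ : Fin (n + 1)).succ = Fin.last (n + 1) := rfl
  simp only [hlast, PiLp.single_apply, if_true, (Fin.last_pos).ne, if_false]
  linear_combination β * hs

theorem norm_eval_add_mul_coeff_le {q : ℂ[X]} (hq : q.natDegree ≤ n + 2) {M : ℝ}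
    (hM : ∀ z : ℂ, ‖z‖ = 1 → ‖q.eval z‖ ≤ M) (hz : ‖z‖ ≤ 1) (hβ : ‖β‖ = 1) :
    ‖q.eval z + β * (1 - ‖z‖ ^ 2) * q.coeff (n + 2)‖ ≤ M := by
  set T := cyclicDilation n z β
  let e : EuclideanSpace ℂ (Fin (n + 2)) := EuclideanSpace.single 0 1
  have haeval : aeval T.toContinuousLinearMap q e = aeval T q e := by
    have := aeval_algHom_apply (Module.End.toContinuousLinearMap
      (EuclideanSpace ℂ (Fin (n + 2)))).toAlgHom T q
    exact congr($this e)
  have hmoment : (aeval T q e) 0 = q.eval z + β * (1 - ‖z‖ ^ 2) * q.coeff (n + 2) := by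
    rw [aeval_eq_sum_range' (Nat.lt_succ_of_le hq), eval_eq_sum_range' (Nat.lt_succ_of_le hq),
      Finset.sum_range_succ, Finset.sum_range_succ _ (n + 2)]
    simp only [LinearMap.add_apply, LinearMap.sum_apply, LinearMap.smul_apply, PiLp.add_apply,
      WithLp.ofLp_sum, Finset.sum_apply, PiLp.smul_apply, smul_eq_mul]
    rw [cyclicDilation_pow_dim_single_zero_apply_zero hz, Finset.sum_congr rfl fun j hj => by
      rw [cyclicDilation_pow_single_zero_apply_zero (Finset.mem_range.1 hj)]]
    ring
  calc ‖q.eval z + β * (1 - ‖z‖ ^ 2) * q.coeff (n + 2)‖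
      ≤ ‖aeval T.toContinuousLinearMap q e‖ := by
        rw [← hmoment, haeval]; exact PiLp.norm_apply_le _ _
    _ ≤ ‖aeval T.toContinuousLinearMap q‖ * ‖e‖ := ContinuousLinearMap.le_opNorm _ _
    _ ≤ M := by
        rw [PiLp.norm_single, norm_one, mul_one]
        exact norm_aeval_le_of_mem_unitary (cyclicDilation_mem_unitary hz hβ) hM

theorem exists_norm_add_ofReal_mul_mul (a b : ℂ) :
    ∃ β : ℂ, ‖β‖ = 1 ∧ ∀ t : ℝ, ‖a + t * β * b‖ = |‖a‖ + t * ‖b‖| := by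
  obtain ⟨c, hc, hca⟩ := Complex.exists_norm_mul_eq_self a
  obtain ⟨d, hd, hdb⟩ := Complex.exists_norm_mul_eq_self b
  have hd0 : d ≠ 0 := norm_ne_zero_iff.1 (by simp [hd])
  refine ⟨c / d, by simp [hc, hd], fun t => ?_⟩
  have hfactor : a + t * (c / d) * b = c * ((‖a‖ + t * ‖b‖ : ℝ) : ℂ) := by
    conv_lhs => rw [← hca, ← hdb]
    push_cast
    field_simp
  rw [hfactor, norm_mul, hc, one_mul, Complex.norm_real, Real.norm_eq_abs]

theorem norm_eval_add_mul_norm_coeff_le {n : ℕ} (hn : 2 ≤ n) {q : ℂ[X]} (hq : q.natDegree ≤ n)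
    {M : ℝ} (hM : ∀ z : ℂ, ‖z‖ = 1 → ‖q.eval z‖ ≤ M) {z : ℂ} (hz : ‖z‖ ≤ 1) :
    ‖q.eval z‖ + (1 - ‖z‖ ^ 2) * ‖q.coeff n‖ ≤ M := by
  obtain ⟨n, rfl⟩ := Nat.exists_eq_add_of_le' hn
  obtain ⟨β, hβ, halign⟩ :=
    exists_norm_add_ofReal_mul_mul (q.eval z) ((1 - ‖z‖ ^ 2) * q.coeff (n + 2))
  have hz2 : ‖(1 - (‖z‖ : ℂ) ^ 2)‖ = 1 - ‖z‖ ^ 2 := by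
    rw [← Complex.norm_of_nonneg (show 0 ≤ 1 - ‖z‖ ^ 2 by nlinarith [norm_nonneg z])]
    push_cast; rfl
  have h := halign 1
  rw [Complex.ofReal_one, one_mul, one_mul, ← mul_assoc, norm_mul, hz2] at h
  exact (le_abs_self _).trans (h ▸ norm_eval_add_mul_coeff_le hq hM hz hβ)

end UnitaryDilation

section Reflect

theorem eval_reflect_inv_mul_pow {K : Type*} [Field K] {n : ℕ} {f : K[X]} (hf : f.natDegree ≤ n)
    {x : K} (hx : x ≠ 0) : (f.reflect n).eval x⁻¹ * x ^ n = f.eval x := by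
  let := invertibleOfNonzero hx
  simpa using eval₂_reflect_mul_pow (RingHom.id K) x n f hf

variable {n : ℕ} {f : ℂ[X]}

theorem norm_eval_reflect_inv (hf : f.natDegree ≤ n) {z : ℂ} (hz : ‖z‖ = 1) :
    ‖(f.reflect n).eval z⁻¹‖ = ‖f.eval z‖ := by
  have hz0 : z ≠ 0 := norm_ne_zero_iff.1 (by simp [hz])
  rw [← eval_reflect_inv_mul_pow hf hz0, norm_mul, norm_pow, hz, one_pow, mul_one]

theorem norm_eval_reflect (hf : f.natDegree ≤ n) {z : ℂ} (hz : ‖z‖ = 1) :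
    ‖(f.reflect n).eval z‖ = ‖f.eval z⁻¹‖ := by
  rw [← norm_eval_reflect_inv hf (z := z⁻¹) (by simp [hz]), inv_inv]

theorem natDegree_reflect_le_of_le {R : Type*} [Semiring R] {n : ℕ} {f : R[X]}
    (hf : f.natDegree ≤ n) : (f.reflect n).natDegree ≤ n :=
  natDegree_reflect_le.trans (max_le le_rfl hf)

theorem coeff_zero_reflect {R : Type*} [Semiring R] (n : ℕ) (f : R[X]) :
    (f.reflect n).coeff 0 = f.coeff n := by
  rw [coeff_reflect, revAt_le n.zero_le, Nat.sub_zero]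

theorem norm_eval_le_of_one_le_norm (hn : 2 ≤ n) (hf : f.natDegree ≤ n)
    {M : ℝ} (hM : ∀ z : ℂ, ‖z‖ = 1 → ‖f.eval z‖ ≤ M) {z : ℂ} (hz : 1 ≤ ‖z‖) :
    ‖f.eval z‖ ≤ ‖z‖ ^ n * M - (‖z‖ ^ n - ‖z‖ ^ (n - 2)) * ‖f.coeff 0‖ := by
  have hz0 : z ≠ 0 := norm_pos_iff.1 (one_pos.trans_le hz)
  have hdisc := norm_eval_add_mul_norm_coeff_le hn (natDegree_reflect_le_of_le hf)
    (fun w hw => (norm_eval_reflect hf hw).trans_le (hM w⁻¹ (by simp [hw])))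
    (z := z⁻¹) (by rw [norm_inv]; exact inv_le_one_of_one_le₀ hz)
  rw [coeff_reflect, revAt_le le_rfl, Nat.sub_self, norm_inv] at hdisc
  have hpow : ‖z‖ ^ n - ‖z‖ ^ (n - 2) = ‖z‖ ^ n * (1 - ‖z‖⁻¹ ^ 2) := by
    rw [pow_sub₀ _ (norm_ne_zero_iff.2 hz0) hn, inv_pow]; ring
  calc ‖f.eval z‖ = ‖z‖ ^ n * ‖(f.reflect n).eval z⁻¹‖ := by
        rw [← eval_reflect_inv_mul_pow hf hz0, norm_mul, norm_pow, mul_comm]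
    _ ≤ ‖z‖ ^ n * (M - (1 - ‖z‖⁻¹ ^ 2) * ‖f.coeff 0‖) := by gcongr; linarith
    _ = _ := by rw [hpow]; ring

end Reflect

section MaximumPrinciple

theorem norm_le_of_forall_norm_eq_one {g : ℂ → ℂ} (hg : DifferentiableOn ℂ g (closedBall 0 1))
    {M : ℝ} (hM : ∀ z : ℂ, ‖z‖ = 1 → ‖g z‖ ≤ M) {z : ℂ} (hz : ‖z‖ ≤ 1) : ‖g z‖ ≤ M := by
  refine Complex.norm_le_of_forall_mem_frontier_norm_le isBounded_ball (U := ball 0 1)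
    (hg.diffContOnCl_ball subset_rfl) (fun w hw => hM w ?_) ?_
  · simpa [frontier_ball] using hw
  · simpa [closure_ball] using hz

theorem le_norm_of_forall_norm_eq_one {g : ℂ → ℂ} (hg : DifferentiableOn ℂ g (closedBall 0 1))
    (hg0 : ∀ z : ℂ, ‖z‖ < 1 → g z ≠ 0) {m : ℝ} (hm0 : 0 < m)
    (hm : ∀ z : ℂ, ‖z‖ = 1 → m ≤ ‖g z‖) {z : ℂ} (hz : ‖z‖ ≤ 1) : m ≤ ‖g z‖ := by
  have hne (w : ℂ) (hw : ‖w‖ ≤ 1) : g w ≠ 0 := by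
    rcases hw.lt_or_eq with hw | hw
    · exact hg0 w hw
    · exact norm_pos_iff.1 (hm0.trans_le (hm w hw))
  have hinv : ‖(g z)⁻¹‖ ≤ m⁻¹ :=
    norm_le_of_forall_norm_eq_one (hg.inv fun w hw => hne w (by simpa using hw))
      (fun w hw => by rw [Pi.inv_apply, norm_inv]; exact inv_anti₀ hm0 (hm w hw)) hz
  rw [norm_inv] at hinv
  exact (inv_le_inv₀ (norm_pos_iff.2 (hne z hz)) hm0).1 hinv

variable {F : ℂ[X]}

theorem eval_reflect_natDegree_ne_zero (hF : ∀ w, F.IsRoot w → ‖w‖ ≤ 1) {x : ℂ} (hx : ‖x‖ < 1) :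
    (F.reflect F.natDegree).eval x ≠ 0 := by
  have hF0 : F ≠ 0 := by
    rintro rfl
    exact absurd (hF 2 (by simp)) (by norm_num)
  rcases eq_or_ne x 0 with rfl | hx0
  · rw [← coeff_zero_eq_eval_zero, coeff_zero_reflect]
    exact leadingCoeff_ne_zero.2 hF0
  · intro h
    have hroot : F.IsRoot x⁻¹ := by
      rw [IsRoot, ← eval_reflect_inv_mul_pow le_rfl (inv_ne_zero hx0), inv_inv, h, zero_mul]
    have h1 := hF _ hroot
    rw [norm_inv] at h1
    exact hx.not_ge ((inv_le_one₀ (norm_pos_iff.2 hx0)).1 h1)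

theorem mul_lt_norm_eval_reflect (hF : ∀ w, F.IsRoot w → ‖w‖ ≤ 1) {m l : ℝ} (hm0 : 0 ≤ m)
    (hm : ∀ z : ℂ, ‖z‖ = 1 → m ≤ ‖F.eval z‖) (hl : l < 1) {x : ℂ} (hx : ‖x‖ < 1) :
    l * m < ‖(F.reflect F.natDegree).eval x‖ := by
  rcases hm0.eq_or_lt with rfl | hm0
  · rw [mul_zero]
    exact norm_pos_iff.2 (eval_reflect_natDegree_ne_zero hF hx)
  · calc l * m < m := by nlinarith
      _ ≤ _ := le_norm_of_forall_norm_eq_one (F.reflect F.natDegree).differentiable.differentiableOn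
        (fun w hw => eval_reflect_natDegree_ne_zero hF hw) hm0
        (fun w hw => (hm w⁻¹ (by simp [hw])).trans_eq (norm_eval_reflect le_rfl hw).symm) hx.le

end MaximumPrinciple

section Dubinin

theorem half_one_add_le_re_inv_one_sub {v : ℂ} (hv : ‖v‖ ≤ 1) (hv1 : v ≠ 1) :
    (1 + (1 - ‖v‖) / (1 + ‖v‖)) / 2 ≤ ((1 - v)⁻¹).re := by
  have hpos : 0 < Complex.normSq (1 - v) := Complex.normSq_pos.2 (sub_ne_zero.2 hv1.symm)
  have hnormSq : Complex.normSq (1 - v) = 1 - 2 * v.re + ‖v‖ ^ 2 := by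
    rw [← Complex.normSq_eq_norm_sq, Complex.normSq_sub]
    simp; ring
  have hleft : (1 + (1 - ‖v‖) / (1 + ‖v‖)) / 2 = 1 / (1 + ‖v‖) := by field_simp; ring
  rw [hleft, Complex.inv_re, div_le_div_iff₀ (by positivity) hpos, hnormSq, Complex.sub_re,
    Complex.one_re]
  have hre : 0 ≤ ‖v‖ + v.re := by linarith [(abs_le.1 (Complex.abs_re_le_norm v)).1]
  linarith [mul_nonneg (sub_nonneg.2 hv) hre]

theorem one_sub_div_one_add_mul_le {x y : ℝ} (hx0 : 0 ≤ x) (hx1 : x ≤ 1) (hy0 : 0 ≤ y)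
    (hy1 : y ≤ 1) :
    (1 - x * y) / (1 + x * y) ≤ (1 - x) / (1 + x) + (1 - y) / (1 + y) := by
  have hxy : 0 ≤ 1 - x * y := sub_nonneg.2 (mul_le_one₀ hx1 hy0 hy1)
  have hdiff : (1 - x) / (1 + x) + (1 - y) / (1 + y) - (1 - x * y) / (1 + x * y) =
      (1 - x) * (1 - y) * (1 - x * y) / ((1 + x) * (1 + y) * (1 + x * y)) := by
    field_simp; ring
  rw [← sub_nonneg, hdiff]
  have := sub_nonneg.2 hx1
  have := sub_nonneg.2 hy1
  positivity

theorem norm_multiset_prod_le_one {s : Multiset ℂ} (hs : ∀ w ∈ s, ‖w‖ ≤ 1) : ‖s.prod‖ ≤ 1 := by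
  induction s using Multiset.induction_on with
  | empty => simp
  | cons w s ih =>
    rw [Multiset.forall_mem_cons] at hs
    rw [Multiset.prod_cons, norm_mul]
    exact mul_le_one₀ hs.1 (norm_nonneg _) (ih hs.2)

theorem card_add_le_re_sum_inv_one_sub {s : Multiset ℂ} (hs : ∀ w ∈ s, ‖w‖ ≤ 1 ∧ w ≠ 1) :
    (s.card + (1 - ‖s.prod‖) / (1 + ‖s.prod‖)) / 2 ≤ ((s.map fun w => (1 - w)⁻¹).sum).re := by
  induction s using Multiset.induction_on with
  | empty => simp
  | cons w s ih =>
    rw [Multiset.forall_mem_cons] at hs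
    obtain ⟨⟨hw, hw1⟩, hs⟩ := hs
    rw [Multiset.card_cons, Multiset.prod_cons, Multiset.map_cons, Multiset.sum_cons,
      Complex.add_re, norm_mul]
    push_cast
    linarith [ih hs, half_one_add_le_re_inv_one_sub hw hw1,
      one_sub_div_one_add_mul_le (norm_nonneg w) hw (norm_nonneg s.prod)
        (norm_multiset_prod_le_one fun w hw => (hs w hw).1)]

variable {F : ℂ[X]}

theorem norm_coeff_zero_eq_mul_norm_prod_roots (F : ℂ[X]) :
    ‖F.coeff 0‖ = ‖F.leadingCoeff‖ * ‖F.roots.prod‖ := by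
  rw [(IsAlgClosed.splits F).coeff_zero_eq_leadingCoeff_mul_prod_roots]
  simp

theorem norm_coeff_zero_le_norm_leadingCoeff (hF : ∀ w, F.IsRoot w → ‖w‖ ≤ 1) :
    ‖F.coeff 0‖ ≤ ‖F.leadingCoeff‖ := by
  rw [norm_coeff_zero_eq_mul_norm_prod_roots]
  exact mul_le_of_le_one_right (norm_nonneg _)
    (norm_multiset_prod_le_one fun w hw => hF w (isRoot_of_mem_roots hw))

theorem natDegree_add_le_re_mul_derivative_div (hF : ∀ w, F.IsRoot w → ‖w‖ ≤ 1) {z : ℂ}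
    (hz : ‖z‖ = 1) (hFz : F.eval z ≠ 0) :
    (F.natDegree + (‖F.leadingCoeff‖ - ‖F.coeff 0‖) / (‖F.leadingCoeff‖ + ‖F.coeff 0‖)) / 2 ≤
      (z * F.derivative.eval z / F.eval z).re := by
  have hz0 : z ≠ 0 := norm_ne_zero_iff.1 (by simp [hz])
  have hlead : ‖F.leadingCoeff‖ ≠ 0 :=
    norm_ne_zero_iff.2 (leadingCoeff_ne_zero.2 (by rintro rfl; simp at hFz))
  have hsplits := IsAlgClosed.splits F
  set s := F.roots.map fun w => z⁻¹ * w
  have hs : ∀ v ∈ s, ‖v‖ ≤ 1 ∧ v ≠ 1 := by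
    intro v hv
    obtain ⟨w, hw, rfl⟩ := Multiset.mem_map.1 hv
    refine ⟨by simpa [hz] using hF w (isRoot_of_mem_roots hw), fun h => hFz ?_⟩
    rw [(inv_mul_eq_one₀ hz0).1 h]
    exact isRoot_of_mem_roots hw
  have hprod : ‖s.prod‖ = ‖F.roots.prod‖ := by
    rw [Multiset.prod_map_mul]
    simp [hz]
  have hsum : (s.map fun w => (1 - w)⁻¹).sum = z * F.derivative.eval z / F.eval z := by
    rw [mul_div_assoc, hsplits.eval_derivative_div_eval_of_ne_zero hFz, ← Multiset.sum_map_mul_left,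
      Multiset.map_map]
    refine congr_arg _ (Multiset.map_congr rfl fun w _ => ?_)
    rw [Function.comp_apply, mul_one_div, ← inv_div, sub_div, div_self hz0, inv_mul_eq_div]
  have hratio : (‖F.leadingCoeff‖ - ‖F.coeff 0‖) / (‖F.leadingCoeff‖ + ‖F.coeff 0‖) =
      (1 - ‖s.prod‖) / (1 + ‖s.prod‖) := by
    rw [hprod, norm_coeff_zero_eq_mul_norm_prod_roots, ← mul_one_sub, ← mul_one_add,
      mul_div_mul_left _ _ hlead]
  rw [hratio, ← hsum, hsplits.natDegree_eq_card_roots, ← Multiset.card_map (fun w => z⁻¹ * w)]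
  exact card_add_le_re_sum_inv_one_sub hs

theorem natDegree_add_mul_norm_eval_le_norm_eval_derivative (hF : ∀ w, F.IsRoot w → ‖w‖ ≤ 1)
    {z : ℂ} (hz : ‖z‖ = 1) :
    (F.natDegree + (‖F.leadingCoeff‖ - ‖F.coeff 0‖) / (‖F.leadingCoeff‖ + ‖F.coeff 0‖)) / 2 *
      ‖F.eval z‖ ≤ ‖F.derivative.eval z‖ := by
  rcases eq_or_ne (F.eval z) 0 with hFz | hFz
  · simp [hFz]
  have h := (natDegree_add_le_re_mul_derivative_div hF hz hFz).trans (Complex.re_le_norm _)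
  rwa [norm_div, norm_mul, hz, one_mul, le_div_iff₀ (norm_pos_iff.2 hFz)] at h

end Dubinin

section PolarDerivative

/-- The polar derivative `n F - z F'` of `F` with respect to the origin, where `F` is regarded as a
polynomial of degree `n`. On the unit circle it has the modulus of the derivative of the reversed
polynomial. -/
noncomputable def polarDerivative {R : Type*} [Ring R] (n : ℕ) (F : R[X]) : R[X] :=
  (n : R[X]) * F - X * derivative F

theorem eval_polarDerivative {R : Type*} [CommRing R] (n : ℕ) (F : R[X]) (z : R) :
    (polarDerivative n F).eval z = n * F.eval z - z * F.derivative.eval z := by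
  simp [polarDerivative]

theorem coeff_polarDerivative {R : Type*} [CommRing R] (n : ℕ) (F : R[X]) (i : ℕ) :
    (polarDerivative n F).coeff i = (n - i) * F.coeff i := by
  rcases i with _ | i
  · simp [polarDerivative]
  · simp [polarDerivative, coeff_X_mul, coeff_derivative]; ring

theorem polarDerivative_add_C_mul_X_pow {R : Type*} [CommRing R] (n : ℕ) (F : R[X]) (μ : R) :
    polarDerivative n (F + C μ * X ^ n) = polarDerivative n F := by
  ext i
  rcases eq_or_ne i n with rfl | hi
  · simp [coeff_polarDerivative]
  · simp [coeff_polarDerivative, coeff_X_pow, hi]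

theorem natDegree_polarDerivative_le {R : Type*} [CommRing R] {n : ℕ} {F : R[X]}
    (hF : F.natDegree ≤ n + 1) : (polarDerivative (n + 1) F).natDegree ≤ n := by
  refine natDegree_le_iff_coeff_eq_zero.2 fun i hi => ?_
  rw [coeff_polarDerivative]
  rcases (Nat.succ_le_of_lt hi).eq_or_lt with rfl | hi
  · rw [sub_self, zero_mul]
  · rw [coeff_eq_zero_of_natDegree_lt (hF.trans_lt hi), mul_zero]

theorem derivative_reflect {R : Type*} [CommRing R] {n : ℕ} {F : R[X]} (hF : F.natDegree ≤ n + 1) :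
    derivative (F.reflect (n + 1)) = (polarDerivative (n + 1) F).reflect n := by
  ext j
  rw [coeff_derivative, coeff_reflect, coeff_reflect]
  rcases le_or_gt j n with hj | hj
  · rw [coeff_polarDerivative, revAt_le (Nat.succ_le_succ hj), revAt_le hj, Nat.succ_sub_succ]
    push_cast [Nat.cast_sub hj]
    ring
  · rw [revAt_eq_self_of_lt (Nat.succ_lt_succ hj), revAt_eq_self_of_lt hj,
      coeff_eq_zero_of_natDegree_lt (hF.trans_lt (Nat.succ_lt_succ hj)), zero_mul,
      coeff_eq_zero_of_natDegree_lt ((natDegree_polarDerivative_le hF).trans_lt hj)]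

variable {n : ℕ} {F : ℂ[X]} {z : ℂ}

theorem norm_eval_derivative_reflect (hF : F.natDegree ≤ n + 1) (hz : ‖z‖ = 1) :
    ‖(derivative (F.reflect (n + 1))).eval z‖ = ‖(polarDerivative (n + 1) F).eval z⁻¹‖ := by
  rw [derivative_reflect hF, norm_eval_reflect (natDegree_polarDerivative_le hF) hz]

theorem norm_eval_polarDerivative_natDegree_le (hF : ∀ w, F.IsRoot w → ‖w‖ ≤ 1) (hz : ‖z‖ = 1) :
    ‖(polarDerivative F.natDegree F).eval z‖ ≤ ‖F.derivative.eval z‖ := by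
  rw [eval_polarDerivative]
  rcases eq_or_ne (F.eval z) 0 with hFz | hFz
  · simp [hFz, hz]
  set ζ := z * F.derivative.eval z / F.eval z
  have hζ : F.natDegree / 2 ≤ ζ.re := by
    refine le_trans ?_ (natDegree_add_le_re_mul_derivative_div hF hz hFz)
    have := div_nonneg (sub_nonneg.2 (norm_coeff_zero_le_norm_leadingCoeff hF))
      (by positivity : 0 ≤ ‖F.leadingCoeff‖ + ‖F.coeff 0‖)
    linarith
  have hζF : z * F.derivative.eval z = ζ * F.eval z := (div_mul_cancel₀ _ hFz).symm
  calc ‖F.natDegree * F.eval z - z * F.derivative.eval z‖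
      = ‖F.natDegree - ζ‖ * ‖F.eval z‖ := by rw [hζF, ← sub_mul, norm_mul]
    _ ≤ ‖ζ‖ * ‖F.eval z‖ := by
        gcongr
        refine (sq_le_sq₀ (norm_nonneg _) (norm_nonneg _)).1 ?_
        simp only [Complex.sq_norm, Complex.normSq_apply, Complex.sub_re, Complex.sub_im,
          Complex.natCast_re, Complex.natCast_im]
        nlinarith [(Nat.cast_nonneg F.natDegree : (0 : ℝ) ≤ F.natDegree)]
    _ = ‖F.derivative.eval z‖ := by rw [← norm_mul, ← hζF, norm_mul, hz, one_mul]

end PolarDerivative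

section Perturbation

variable {n : ℕ} {F : ℂ[X]} {μ z : ℂ}

theorem coeff_add_C_mul_X_pow_ne_zero (hμ : ∀ x : ℂ, ‖x‖ < 1 → ‖(F.reflect n).eval x‖ ≠ ‖μ‖) :
    F.coeff n + μ ≠ 0 := by
  intro h
  refine hμ 0 (by simp) ?_
  rw [← coeff_zero_eq_eval_zero, coeff_zero_reflect, eq_neg_of_add_eq_zero_left h, norm_neg]

theorem natDegree_add_C_mul_X_pow (hF : F.natDegree ≤ n) (hμ : F.coeff n + μ ≠ 0) :
    (F + C μ * X ^ n).natDegree = n :=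
  natDegree_eq_of_le_of_coeff_ne_zero
    (natDegree_add_le_of_degree_le hF (natDegree_C_mul_X_pow_le μ n)) (by simpa using hμ)

theorem norm_le_one_of_isRoot_add_C_mul_X_pow (hF : F.natDegree ≤ n)
    (hμ : ∀ x : ℂ, ‖x‖ < 1 → ‖(F.reflect n).eval x‖ ≠ ‖μ‖) {w : ℂ}
    (hw : (F + C μ * X ^ n).IsRoot w) : ‖w‖ ≤ 1 := by
  by_contra! hw1
  have hw0 : w ≠ 0 := norm_pos_iff.1 (one_pos.trans hw1)
  refine hμ w⁻¹ (by rw [norm_inv]; exact inv_lt_one_of_one_lt₀ hw1) ?_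
  have hroot : ((F.reflect n).eval w⁻¹ + μ) * w ^ n = 0 := by
    rw [add_mul, eval_reflect_inv_mul_pow hF hw0]
    simpa using hw
  rw [eq_neg_of_add_eq_zero_left ((mul_eq_zero_iff_right (pow_ne_zero n hw0)).1 hroot), norm_neg]

theorem exists_norm_eval_derivative_add_C_mul_X_pow (n : ℕ) (F : ℂ[X]) (hz : ‖z‖ = 1) {ρ : ℝ}
    (hρ : 0 ≤ ρ) :
    ∃ μ : ℂ, ‖μ‖ = ρ ∧
      ‖(derivative (F + C μ * X ^ n)).eval z‖ = |‖F.derivative.eval z‖ - n * ρ| := by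
  obtain ⟨β, hβ, halign⟩ :=
    exists_norm_add_ofReal_mul_mul (F.derivative.eval z) (n * z ^ (n - 1))
  refine ⟨(-ρ : ℝ) * β, by simp [hβ, abs_of_nonneg hρ], ?_⟩
  have h := halign (-ρ)
  rw [norm_mul, norm_pow, hz, one_pow, mul_one, Complex.norm_natCast, neg_mul, mul_comm ρ,
    ← sub_eq_add_neg] at h
  rw [← h, derivative_add, derivative_C_mul_X_pow, eval_add, eval_C_mul, eval_pow, eval_X,
    ← mul_assoc]

theorem norm_eval_polarDerivative_le_abs_sub (hF : F.natDegree ≤ n) (hz : ‖z‖ = 1) {ρ : ℝ}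
    (hρ0 : 0 ≤ ρ) (hρ : ∀ x : ℂ, ‖x‖ < 1 → ‖(F.reflect n).eval x‖ ≠ ρ) :
    ‖(polarDerivative n F).eval z‖ ≤ |‖F.derivative.eval z‖ - n * ρ| := by
  obtain ⟨μ, rfl, hder⟩ := exists_norm_eval_derivative_add_C_mul_X_pow n F hz hρ0
  rw [← hder, ← polarDerivative_add_C_mul_X_pow n F μ]
  nth_rewrite 1 [← natDegree_add_C_mul_X_pow hF (coeff_add_C_mul_X_pow_ne_zero hρ)]
  exact norm_eval_polarDerivative_natDegree_le
    (fun _ => norm_le_one_of_isRoot_add_C_mul_X_pow hF hρ) hz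

theorem norm_eval_derivative_of_eval_polarDerivative_eq_zero (hz : ‖z‖ = 1)
    (h : (polarDerivative n F).eval z = 0) : ‖F.derivative.eval z‖ = n * ‖F.eval z‖ := by
  rw [eval_polarDerivative, sub_eq_zero] at h
  simpa [hz] using (congr_arg norm h).symm

theorem norm_eval_derivative_add_norm_eval_polarDerivative_le (hn : n ≠ 0) (hF : F.natDegree ≤ n)
    {M : ℝ} (hM : ∀ z : ℂ, ‖z‖ = 1 → ‖F.eval z‖ ≤ M) (hz : ‖z‖ = 1) :
    ‖F.derivative.eval z‖ + ‖(polarDerivative n F).eval z‖ ≤ n * M := by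
  have hn0 : (0 : ℝ) < n := by exact_mod_cast hn.bot_lt
  rcases eq_or_ne ((polarDerivative n F).eval z) 0 with h0 | h0
  · rw [h0, norm_zero, add_zero, norm_eval_derivative_of_eval_polarDerivative_eq_zero hz h0]
    gcongr
    exact hM z hz
  by_contra! hlt
  obtain ⟨r, hr, hrlt⟩ := exists_between
    (max_lt hlt (lt_add_of_pos_right ‖F.derivative.eval z‖ (norm_pos_iff.2 h0)))
  obtain ⟨hMr, hFr⟩ := max_lt_iff.1 hr
  have hMρ : M < r / n := by rwa [lt_div_iff₀' hn0]
  have hρ0 : 0 ≤ r / n := div_nonneg ((norm_nonneg _).trans hFr.le) hn0.le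
  have hle := norm_eval_polarDerivative_le_abs_sub hF hz hρ0 fun x hx => ne_of_lt <|
    (norm_le_of_forall_norm_eq_one (F.reflect n).differentiable.differentiableOn
      (fun w hw => (norm_eval_reflect hF hw).trans_le (hM w⁻¹ (by simp [hw]))) hx.le).trans_lt hMρ
  rw [mul_div_cancel₀ _ hn0.ne', abs_of_neg (sub_neg.2 hFr)] at hle
  linarith

variable {t : ℝ}

theorem le_norm_eval_of_lt_norm_eval_reflect (hF : F.natDegree ≤ n)
    (ht : ∀ x : ℂ, ‖x‖ < 1 → t < ‖(F.reflect n).eval x‖) (hz : ‖z‖ = 1) : t ≤ ‖F.eval z‖ := by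
  rw [← norm_eval_reflect_inv hF hz]
  have hmem : z⁻¹ ∈ closure (ball (0 : ℂ) 1) := by simp [closure_ball, hz]
  refine closure_minimal (fun x hx => ?_)
    (isClosed_le continuous_const (F.reflect n).continuous.norm) hmem
  exact (ht x (by simpa using hx)).le

theorem lt_norm_coeff_of_lt_norm_eval_reflect
    (ht : ∀ x : ℂ, ‖x‖ < 1 → t < ‖(F.reflect n).eval x‖) : t < ‖F.coeff n‖ := by
  simpa [← coeff_zero_eq_eval_zero, coeff_zero_reflect] using ht 0

theorem norm_eval_polarDerivative_le_sub (hn : n ≠ 0) (hF : F.natDegree ≤ n) (ht0 : 0 ≤ t)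
    (ht : ∀ x : ℂ, ‖x‖ < 1 → t < ‖(F.reflect n).eval x‖) (hz : ‖z‖ = 1) :
    ‖(polarDerivative n F).eval z‖ ≤ ‖F.derivative.eval z‖ - n * t := by
  have hn0 : (0 : ℝ) < n := by exact_mod_cast hn.bot_lt
  rcases le_or_gt (n * t) ‖F.derivative.eval z‖ with hnt | hnt
  · rw [← abs_of_nonneg (sub_nonneg.2 hnt)]
    exact norm_eval_polarDerivative_le_abs_sub hF hz ht0 fun x hx => (ht x hx).ne'
  exfalso
  have hρt : ‖F.derivative.eval z‖ / n < t := by rwa [div_lt_iff₀' hn0]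
  have hpolar := norm_eval_polarDerivative_le_abs_sub hF hz (by positivity)
    fun x hx => (hρt.trans (ht x hx)).ne'
  rw [mul_div_cancel₀ _ hn0.ne', sub_self, abs_zero, norm_le_zero_iff] at hpolar
  rw [norm_eval_derivative_of_eval_polarDerivative_eq_zero hz hpolar] at hnt
  exact hnt.not_ge
    (mul_le_mul_of_nonneg_left (le_norm_eval_of_lt_norm_eval_reflect hF ht hz) hn0.le)

theorem norm_eval_polarDerivative_le_mul_sub_div_two (hn : n ≠ 0) (hF : F.natDegree ≤ n)
    (ht0 : 0 ≤ t) (ht : ∀ x : ℂ, ‖x‖ < 1 → t < ‖(F.reflect n).eval x‖) {M : ℝ}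
    (hM : ∀ z : ℂ, ‖z‖ = 1 → ‖F.eval z‖ ≤ M) (hz : ‖z‖ = 1) :
    ‖(polarDerivative n F).eval z‖ ≤ n * (M - t) / 2 := by
  linarith [norm_eval_derivative_add_norm_eval_polarDerivative_le hn hF hM hz,
    norm_eval_polarDerivative_le_sub hn hF ht0 ht hz]

theorem neg_one_le_sub_div_add {a c : ℝ} (ha : 0 < a) (hc : 0 ≤ c) : -1 ≤ (a - c) / (a + c) := by
  rw [le_div_iff₀ (by positivity)]
  linarith

theorem sub_div_add_le_sub_div_add {a b c : ℝ} (ha : 0 < a) (hab : a ≤ b) (hc : 0 ≤ c) :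
    (a - c) / (a + c) ≤ (b - c) / (b + c) := by
  rw [div_le_div_iff₀ (by positivity) (by linarith)]
  nlinarith

theorem add_mul_norm_eval_sub_le_norm_eval_derivative_sub (hn : n ≠ 0) (hF : F.natDegree ≤ n)
    (ht0 : 0 ≤ t) (ht : ∀ x : ℂ, ‖x‖ < 1 → t < ‖(F.reflect n).eval x‖) (hz : ‖z‖ = 1) :
    (n + (‖F.coeff n‖ - t - ‖F.coeff 0‖) / (‖F.coeff n‖ - t + ‖F.coeff 0‖)) / 2 *
      (‖F.eval z‖ - t) ≤ ‖F.derivative.eval z‖ - n * t := by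
  obtain ⟨μ, rfl, hder⟩ := exists_norm_eval_derivative_add_C_mul_X_pow n F hz ht0
  set G := F + C μ * X ^ n
  have hμ (x : ℂ) (hx : ‖x‖ < 1) : ‖(F.reflect n).eval x‖ ≠ ‖μ‖ := (ht x hx).ne'
  have hGdeg : G.natDegree = n := natDegree_add_C_mul_X_pow hF (coeff_add_C_mul_X_pow_ne_zero hμ)
  have hnt : 0 ≤ ‖F.derivative.eval z‖ - n * ‖μ‖ :=
    (norm_nonneg _).trans (norm_eval_polarDerivative_le_sub hn hF ht0 ht hz)
  have hG := natDegree_add_mul_norm_eval_le_norm_eval_derivative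
    (fun _ => norm_le_one_of_isRoot_add_C_mul_X_pow hF hμ) hz
  rw [hder, abs_of_nonneg hnt, hGdeg] at hG
  refine le_trans ?_ hG
  have hcoeff0 : G.coeff 0 = F.coeff 0 := by simp [G, hn.symm]
  have hlead : ‖F.coeff n‖ - ‖μ‖ ≤ ‖G.leadingCoeff‖ := by
    rw [leadingCoeff, hGdeg, coeff_add, coeff_C_mul_X_pow, if_pos rfl]
    exact norm_sub_le_norm_add _ _
  have heval : ‖F.eval z‖ - ‖μ‖ ≤ ‖G.eval z‖ := by
    simpa [G, hz] using norm_sub_le_norm_add (F.eval z) (μ * z ^ n)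
  have hpos : 0 < ‖F.coeff n‖ - ‖μ‖ := sub_pos.2 (lt_norm_coeff_of_lt_norm_eval_reflect ht)
  have hratio := sub_div_add_le_sub_div_add hpos hlead (norm_nonneg (F.coeff 0))
  have hn1 : (1 : ℝ) ≤ n := by exact_mod_cast hn.bot_lt
  rw [hcoeff0]
  refine mul_le_mul (by linarith) heval
    (sub_nonneg.2 (le_norm_eval_of_lt_norm_eval_reflect hF ht hz)) ?_
  linarith [neg_one_le_sub_div_add hpos (norm_nonneg (F.coeff 0))]

end Perturbation

section Growth

theorem hasDerivAt_pow_succ_sub_one_div (d : ℕ) (x : ℝ) :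
    HasDerivAt (fun y : ℝ => (y ^ (d + 1) - 1) / ((d : ℝ) + 1)) (x ^ d) x := by
  have hd : (d : ℝ) + 1 ≠ 0 := by positivity
  simpa [hd] using ((hasDerivAt_pow (d + 1) x).sub_const 1).div_const ((d : ℝ) + 1)

theorem norm_eval_le_add_of_norm_eval_derivative_le {n : ℕ} (hn : 2 < n) {G : ℂ[X]}
    (hG : G.natDegree ≤ n) {M E : ℝ} (hM : ∀ z : ℂ, ‖z‖ = 1 → ‖G.eval z‖ ≤ M)
    (hE : ∀ z : ℂ, ‖z‖ = 1 → ‖G.derivative.eval z‖ ≤ E) {u : ℂ} (hu : ‖u‖ = 1) {R : ℝ}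
    (hR : 1 ≤ R) :
    ‖G.eval (u * R)‖ ≤ M + (R ^ n - 1) / n * E -
      ((R ^ n - 1) / n - (R ^ (n - 2) - 1) / ((n : ℝ) - 2)) * ‖G.coeff 1‖ := by
  obtain ⟨d, rfl⟩ := Nat.exists_eq_add_of_le' hn
  let B (x : ℝ) : ℝ := M + (x ^ (d + 3) - 1) / ((d + 2 : ℕ) + 1) * E -
    ((x ^ (d + 3) - 1) / ((d + 2 : ℕ) + 1) - (x ^ (d + 1) - 1) / (d + 1)) * ‖G.coeff 1‖
  have hB (x : ℝ) : HasDerivAt B (x ^ (d + 2) * E - (x ^ (d + 2) - x ^ d) * ‖G.coeff 1‖) x :=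
    (((hasDerivAt_pow_succ_sub_one_div (d + 2) x).mul_const E).const_add M).sub
      (((hasDerivAt_pow_succ_sub_one_div (d + 2) x).sub
        (hasDerivAt_pow_succ_sub_one_div d x)).mul_const _)
  have hray (x : ℝ) :
      HasDerivAt (fun y : ℝ => G.eval (u * y)) (G.derivative.eval (u * x) * (u * 1)) x :=
    (G.hasDerivAt (u * x)).comp x (h := fun y : ℝ => u * y)
      (Complex.ofRealCLM.hasDerivAt.const_mul u)
  have hbound (x : ℝ) (hx : x ∈ Set.Ico 1 R) : ‖G.derivative.eval (u * x) * (u * 1)‖ ≤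
      x ^ (d + 2) * E - (x ^ (d + 2) - x ^ d) * ‖G.coeff 1‖ := by
    have hnorm : ‖u * x‖ = x := by
      rw [norm_mul, hu, one_mul, Complex.norm_of_nonneg (zero_le_one.trans hx.1)]
    have h := norm_eval_le_of_one_le_norm (Nat.le_add_left 2 d)
      ((natDegree_derivative_le G).trans (Nat.sub_le_sub_right hG 1)) hE (hx.1.trans_eq hnorm.symm)
    rw [hnorm, coeff_derivative] at h
    simpa [hu] using h
  have hgrowth := image_norm_le_of_norm_deriv_right_le_deriv_boundary
    (fun x _ => (hray x).continuousAt.continuousWithinAt) (fun x _ => (hray x).hasDerivWithinAt)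
    (by simpa [B] using hM u hu) hB hbound (Set.right_mem_Icc.2 hR)
  convert hgrowth using 4 <;> push_cast <;> ring

theorem norm_eval_reflect_mul_le {n : ℕ} (hn : 2 < n) {F : ℂ[X]} (hF : F.natDegree ≤ n) {t M : ℝ}
    (ht0 : 0 ≤ t) (ht : ∀ x : ℂ, ‖x‖ < 1 → t < ‖(F.reflect n).eval x‖)
    (hM : ∀ z : ℂ, ‖z‖ = 1 → ‖F.eval z‖ ≤ M) {u : ℂ} (hu : ‖u‖ = 1) {R : ℝ} (hR : 1 ≤ R) :
    ‖(F.reflect n).eval (u * R)‖ ≤ M + (R ^ n - 1) * (M - t) / 2 -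
      ((R ^ n - 1) / n - (R ^ (n - 2) - 1) / ((n : ℝ) - 2)) * ‖F.coeff (n - 1)‖ := by
  have hreflect (w : ℂ) (hw : ‖w‖ = 1) : ‖(F.reflect n).eval w‖ ≤ M :=
    (norm_eval_reflect hF hw).trans_le (hM w⁻¹ (by simp [hw]))
  have hderiv (w : ℂ) (hw : ‖w‖ = 1) :
      ‖(derivative (F.reflect n)).eval w‖ ≤ n * (M - t) / 2 := by
    obtain ⟨d, rfl⟩ := Nat.exists_eq_add_one.2 (by lia : 0 < n)
    rw [norm_eval_derivative_reflect hF hw]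
    exact norm_eval_polarDerivative_le_mul_sub_div_two d.succ_ne_zero hF ht0 ht hM (by simp [hw])
  have hgrowth := norm_eval_le_add_of_norm_eval_derivative_le hn (natDegree_reflect_le_of_le hF)
    hreflect hderiv hu hR
  have hmid : (R ^ n - 1) / n * (n * (M - t) / 2) = (R ^ n - 1) * (M - t) / 2 := by
    have : (n : ℝ) ≠ 0 := by positivity
    field_simp
  rwa [coeff_reflect, revAt_le (by lia), hmid] at hgrowth

end Growth

section CircleExtrema

variable (P : ℂ[X]) {r : ℝ} {z : ℂ}

theorem norm_eval_le_maxMod (hz : ‖z‖ = r) : ‖P.eval z‖ ≤ maxMod P r := by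
  have hbdd : BddAbove (Set.range fun w : sphere (0 : ℂ) r => ‖P.eval (w : ℂ)‖) :=
    (isCompact_range (P.continuous.comp continuous_subtype_val).norm).bddAbove
  exact le_ciSup hbdd ⟨z, by simpa using hz⟩

theorem exists_norm_eval_eq_maxMod (hr : 0 ≤ r) : ∃ z : ℂ, ‖z‖ = r ∧ ‖P.eval z‖ = maxMod P r := by
  have hne : (sphere (0 : ℂ) r).Nonempty := NormedSpace.sphere_nonempty.2 hr
  have := hne.to_subtype
  obtain ⟨z, hz, hmax⟩ :=
    (isCompact_sphere (0 : ℂ) r).exists_isMaxOn hne P.continuous.norm.continuousOn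
  have hzr : ‖z‖ = r := by simpa using hz
  exact ⟨z, hzr, (norm_eval_le_maxMod P hzr).antisymm (ciSup_le fun w => hmax w.2)⟩

theorem minMod_le_norm_eval (hz : ‖z‖ = r) : minMod P r ≤ ‖P.eval z‖ :=
  ciInf_le (f := fun w : sphere (0 : ℂ) r => ‖P.eval (w : ℂ)‖)
    ⟨0, Set.forall_mem_range.2 fun _ => norm_nonneg _⟩ ⟨z, by simpa using hz⟩

theorem minMod_nonneg (r : ℝ) : 0 ≤ minMod P r :=
  Real.iInf_nonneg fun _ => norm_nonneg _

end CircleExtrema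

section Scaling

variable {P : ℂ[X]} {k : ℝ} {z : ℂ}

theorem eval_comp_C_mul_X {R : Type*} [CommSemiring R] (P : R[X]) (a z : R) :
    (P.comp (C a * X)).eval z = P.eval (a * z) := by
  simp

theorem norm_coeff_comp_C_mul_X (hk : 0 ≤ k) (P : ℂ[X]) (i : ℕ) :
    ‖(P.comp (C (k : ℂ) * X)).coeff i‖ = k ^ i * ‖P.coeff i‖ := by
  rw [comp_C_mul_X_coeff, norm_mul, norm_pow, Complex.norm_of_nonneg hk, mul_comm]

theorem natDegree_comp_C_mul_X {R : Type*} [CommRing R] [IsDomain R] (P : R[X]) {a : R}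
    (ha : a ≠ 0) : (P.comp (C a * X)).natDegree = P.natDegree := by
  rw [natDegree_comp, natDegree_C_mul_X a ha, mul_one]

theorem norm_ofReal_mul_of_norm_eq_one (hk : 0 ≤ k) (hz : ‖z‖ = 1) : ‖(k : ℂ) * z‖ = k := by
  rw [norm_mul, Complex.norm_of_nonneg hk, hz, mul_one]

theorem norm_eval_comp_C_mul_X_le_maxMod (hk : 0 ≤ k) (P : ℂ[X]) (hz : ‖z‖ = 1) :
    ‖(P.comp (C (k : ℂ) * X)).eval z‖ ≤ maxMod P k := by
  rw [eval_comp_C_mul_X]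
  exact norm_eval_le_maxMod P (norm_ofReal_mul_of_norm_eq_one hk hz)

theorem mul_minMod_lt_norm_eval_reflect_comp (hk : 0 < k)
    (hP : ∀ w : ℂ, P.IsRoot w → ‖w‖ ≤ k) {l : ℝ} (hl : l < 1) {x : ℂ} (hx : ‖x‖ < 1) :
    l * minMod P k < ‖((P.comp (C (k : ℂ) * X)).reflect P.natDegree).eval x‖ := by
  rw [← natDegree_comp_C_mul_X P (Complex.ofReal_ne_zero.2 hk.ne')]
  refine mul_lt_norm_eval_reflect (fun w hw => ?_) (minMod_nonneg P k) (fun z hz => ?_) hl hx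
  · rw [IsRoot, eval_comp_C_mul_X] at hw
    have h := hP _ hw
    rwa [norm_mul, Complex.norm_of_nonneg hk.le, mul_le_iff_le_one_right hk] at h
  · rw [eval_comp_C_mul_X]
    exact minMod_le_norm_eval P (norm_ofReal_mul_of_norm_eq_one hk.le hz)

variable {n : ℕ} {t : ℝ}

theorem mul_norm_eval_derivative_le_of_norm_eq (hn : 2 < n) (hP : P.natDegree ≤ n) (hk : 1 ≤ k)
    (hz : ‖z‖ = k) :
    k * ‖P.derivative.eval z‖ ≤
      k ^ n * (maxMod (derivative P) 1 - (1 - 1 / k ^ 2) * ‖P.coeff 1‖) := by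
  obtain ⟨d, rfl⟩ := Nat.exists_eq_add_of_le' hn
  have h := norm_eval_le_of_one_le_norm (Nat.le_add_left 2 d)
    ((natDegree_derivative_le P).trans (Nat.sub_le_sub_right hP 1))
    (fun z => norm_eval_le_maxMod (derivative P)) (hk.trans_eq hz.symm)
  rw [hz, coeff_derivative, Nat.add_sub_cancel] at h
  simp only [zero_add, Nat.cast_zero, mul_one] at h
  calc k * ‖P.derivative.eval z‖
      ≤ k * (k ^ (d + 2) * maxMod (derivative P) 1 - (k ^ (d + 2) - k ^ d) * ‖P.coeff 1‖) := by
        gcongr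
    _ = _ := by field_simp; ring

theorem add_mul_maxMod_sub_le (hn : 2 < n) (hP : P.natDegree ≤ n) (hk : 1 ≤ k) (ht0 : 0 ≤ t)
    (ht : ∀ x : ℂ, ‖x‖ < 1 → t < ‖((P.comp (C (k : ℂ) * X)).reflect n).eval x‖) :
    (n + (k ^ n * ‖P.coeff n‖ - t - ‖P.coeff 0‖) / (k ^ n * ‖P.coeff n‖ - t + ‖P.coeff 0‖)) / 2 *
        (maxMod P k - t) + n * t ≤
      k ^ n * (maxMod (derivative P) 1 - (1 - 1 / k ^ 2) * ‖P.coeff 1‖) := by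
  have hk0 : 0 < k := one_pos.trans_le hk
  have hkC : (k : ℂ) ≠ 0 := Complex.ofReal_ne_zero.2 hk0.ne'
  obtain ⟨z, hz, hmax⟩ := exists_norm_eval_eq_maxMod P hk0.le
  have hdub := add_mul_norm_eval_sub_le_norm_eval_derivative_sub (z := z / k) (by lia)
    ((natDegree_comp_C_mul_X P hkC).trans_le hP) ht0 ht
    (by rw [norm_div, hz, Complex.norm_of_nonneg hk0.le, div_self hk0.ne'])
  have hder : ‖(derivative (P.comp (C (k : ℂ) * X))).eval (z / k)‖ =
      k * ‖P.derivative.eval z‖ := by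
    rw [derivative_comp, eval_mul, eval_comp_C_mul_X, mul_div_cancel₀ _ hkC]
    simp [abs_of_pos hk0]
  rw [hder, eval_comp_C_mul_X, mul_div_cancel₀ _ hkC, hmax, norm_coeff_comp_C_mul_X hk0.le,
    norm_coeff_comp_C_mul_X hk0.le, pow_zero, one_mul] at hdub
  linarith [mul_norm_eval_derivative_le_of_norm_eq hn hP hk hz]

theorem pow_mul_maxMod_one_le (hn : 2 < n) (hP : P.natDegree ≤ n) (hk : 1 ≤ k) (ht0 : 0 ≤ t)
    (ht : ∀ x : ℂ, ‖x‖ < 1 → t < ‖((P.comp (C (k : ℂ) * X)).reflect n).eval x‖) :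
    k ^ n * maxMod P 1 ≤ maxMod P k + (k ^ n - 1) * (maxMod P k - t) / 2 -
      ((k ^ n - 1) / n - (k ^ (n - 2) - 1) / ((n : ℝ) - 2)) *
        (k ^ (n - 1) * ‖P.coeff (n - 1)‖) := by
  have hk0 : 0 < k := one_pos.trans_le hk
  have hkC : (k : ℂ) ≠ 0 := Complex.ofReal_ne_zero.2 hk0.ne'
  have hF : (P.comp (C (k : ℂ) * X)).natDegree ≤ n := (natDegree_comp_C_mul_X P hkC).trans_le hP
  obtain ⟨z, hz, hmax⟩ := exists_norm_eval_eq_maxMod P zero_le_one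
  have hz0 : z ≠ 0 := norm_ne_zero_iff.1 (by simp [hz])
  have hgrowth := norm_eval_reflect_mul_le hn hF ht0 ht
    (fun w => norm_eval_comp_C_mul_X_le_maxMod hk0.le P) (u := z⁻¹) (by simp [hz]) hk
  rw [norm_coeff_comp_C_mul_X hk0.le] at hgrowth
  refine le_of_eq_of_le ?_ hgrowth
  have hreflect := congr_arg norm (eval_reflect_inv_mul_pow hF (div_ne_zero hz0 hkC))
  rw [eval_comp_C_mul_X, mul_div_cancel₀ _ hkC, hmax, norm_mul, norm_pow, norm_div, hz,
    Complex.norm_of_nonneg hk0.le, inv_div, div_eq_inv_mul] at hreflect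
  rw [← hreflect, one_div_pow]
  field_simp

end Scaling

theorem add_le_of_growth_bounds {ν s K M Q D t ψ c : ℝ} (hK : 0 < K) (hs : 0 ≤ ν + s)
    (hD : (ν + s) / 2 * (M - t) + ν * t ≤ K * D)
    (hQ : K * Q ≤ M + (K - 1) * (M - t) / 2 - ψ * c) :
    ν / (1 + K) * (Q + t) + 1 / (K * (1 + K)) * (s * (K * Q - t) + c * ψ * (ν + s)) ≤ D := by
  have hcollect : ν / (1 + K) * (Q + t) +
      1 / (K * (1 + K)) * (s * (K * Q - t) + c * ψ * (ν + s)) =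
      ((ν + s) * (K * Q + ψ * c) + (ν * K - s) * t) / (K * (1 + K)) := by
    field_simp; ring
  rw [hcollect, div_le_iff₀ (by positivity)]
  calc (ν + s) * (K * Q + ψ * c) + (ν * K - s) * t
      ≤ (ν + s) * (M + (K - 1) * (M - t) / 2) + (ν * K - s) * t := by
        gcongr (ν + s) * ?_ + _
        linarith
    _ = (1 + K) * ((ν + s) / 2 * (M - t) + ν * t) := by ring
    _ ≤ (1 + K) * (K * D) := by gcongr
    _ = D * (K * (1 + K)) := by ring

theorem stmt_2 (n : ℕ) (hn : 2 < n) (P : Polynomial ℂ) (hdeg : P.natDegree = n)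
    (k : ℝ) (hk : 1 ≤ k) (hroots : ∀ w : ℂ, P.IsRoot w → ‖w‖ ≤ k)
    (m : ℝ) (hm : m = minMod P k) (l : ℝ) (hl0 : 0 ≤ l) (hl1 : l < 1) :
    maxMod (Polynomial.derivative P) 1 ≥
      ((n : ℝ) / (1 + k ^ n)) * (maxMod P 1 + l * m) +
        (1 - 1 / k ^ 2) * ‖P.coeff 1‖ +
        (1 / (k ^ n * (1 + k ^ n))) *
          (((k ^ n * ‖P.coeff n‖ - l * m - ‖P.coeff 0‖) /
                (k ^ n * ‖P.coeff n‖ - l * m + ‖P.coeff 0‖)) *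
              (k ^ n * maxMod P 1 - l * m) +
            k ^ (n - 1) * ‖P.coeff (n - 1)‖ *
              ((k ^ n - 1) / (n : ℝ) - (k ^ (n - 2) - 1) / ((n : ℝ) - 2)) *
              ((n : ℝ) +
                (k ^ n * ‖P.coeff n‖ - l * m - ‖P.coeff 0‖) /
                  (k ^ n * ‖P.coeff n‖ - l * m + ‖P.coeff 0‖))) := by
  subst hm hdeg
  have hk0 : 0 < k := one_pos.trans_le hk
  have ht0 : 0 ≤ l * minMod P k := mul_nonneg hl0 (minMod_nonneg P k)
  have ht (x : ℂ) (hx : ‖x‖ < 1) := mul_minMod_lt_norm_eval_reflect_comp hk0 hroots hl1 hx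
  have hlead := lt_norm_coeff_of_lt_norm_eval_reflect ht
  rw [norm_coeff_comp_C_mul_X hk0.le] at hlead
  have hratio := neg_one_le_sub_div_add (sub_pos.2 hlead) (norm_nonneg (P.coeff 0))
  have hn1 : (1 : ℝ) ≤ P.natDegree := by exact_mod_cast (one_lt_two.trans hn).le
  linarith [add_le_of_growth_bounds (pow_pos hk0 P.natDegree) (by linarith)
    (add_mul_maxMod_sub_le hn le_rfl hk ht0 ht) (pow_mul_maxMod_one_le hn le_rfl hk ht0 ht)]
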